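/- There is an absolute constant d > 0 such that every string graph with m ≥ 2 edges has a separator of size at most d·√m·log₂ m. -/

import Mathlib

/-- A curve in the plane: the image of a continuous map from `[0,1]` to `ℝ²`. -/
def IsCurve (c : Set (ℝ × ℝ)) : Prop :=
  ∃ f : ℝ → ℝ × ℝ, ContinuousOn f (Set.Icc 0 1) ∧ c = f '' Set.Icc 0 1

/-- A string graph: an intersection graph of curves in the plane. -/
def IsStringGraph {V : Type*} (G : SimpleGraph V) : Prop :=
  ∃ γ : V → Set (ℝ × ℝ), (∀ v, IsCurve (γ v)) ∧
    ∀ u v : V, u ≠ v → (G.Adj u v ↔ (γ u ∩ γ v).Nonempty)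

/-- `S` is a separator of `G`: the vertex set is partitioned as `S ∪ V₁ ∪ V₂` with
`|V₁|, |V₂| ≤ (2/3)|V|` and no edges between `V₁` and `V₂`. -/
def IsSeparator {V : Type*} [Fintype V] [DecidableEq V]
    (G : SimpleGraph V) (S : Finset V) : Prop :=
  ∃ V₁ V₂ : Finset V,
    S ∪ V₁ ∪ V₂ = Finset.univ ∧
    Disjoint S V₁ ∧ Disjoint S V₂ ∧ Disjoint V₁ V₂ ∧
    (V₁.card : ℝ) ≤ 2 / 3 * Fintype.card V ∧
    (V₂.card : ℝ) ≤ 2 / 3 * Fintype.card V ∧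
    ∀ u ∈ V₁, ∀ v ∈ V₂, ¬ G.Adj u v

theorem log_change_unique (L1 L2 : ℝ → ℂ) (h1 : Continuous L1) (h2 : Continuous L2) (c : ℂ)
    (h : ∀ t, Complex.exp (L1 t) = c * Complex.exp (L2 t)) :
    L1 1 - L1 0 = L2 1 - L2 0 := by
  have key : (fun t => L1 t - L2 t) = fun _ => L1 0 - L2 0 := by
    refine Complex.isCoveringMap_exp.eq_of_comp_eq (by fun_prop) (by fun_prop) ?_ 0 rfl
    funext t
    apply Subtype.ext
    simp only [Function.comp, Complex.exp_sub, h]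
    rw [mul_div_assoc, mul_div_assoc, div_self (Complex.exp_ne_zero _),
      div_self (Complex.exp_ne_zero _)]
  have := congrFun key 1
  linear_combination this

theorem exists_log {A : Type*} [TopologicalSpace A] [SimplyConnectedSpace A]
    [LocallyPathConnectedSpace A] (a : A) (g : A → ℂ) (hg : Continuous g) (h0 : ∀ t, g t ≠ 0) :
    ∃ f : A → ℂ, Continuous f ∧ ∀ t, Complex.exp (f t) = g t := by
  obtain ⟨f, ⟨-, hf⟩, -⟩ := Complex.isCoveringMapOn_exp.existsUnique_continuousMap_lifts
    ⟨g, hg⟩ (a₀ := a) (e₀ := Complex.log (g a)) (Complex.exp_log (h0 a)) (fun t => by simpa using h0 t)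
  exact ⟨f, f.continuous, fun t => congrFun hf t⟩

/-- Parity core of the van Kampen obstruction for `K₅`. -/
theorem parity_core (n : Fin 5 → Fin 5 → Fin 5 → ℤ)
    (h : ∀ i j k l : Fin 5, i < j → k < l → i ≠ k → i ≠ l → j ≠ k → j ≠ l →
      2 * (n i j k + n k l j - n i j l - n k l i) + (if j < k then -1 else 1)
        - (if i < k then -1 else 1) - (if j < l then -1 else 1) + (if i < l then -1 else 1) = 0) :
    False := by
  have a1 := h 0 1 2 3 (by decide) (by decide) (by decide) (by decide) (by decide) (by decide)
  have a2 := h 0 1 2 4 (by decide) (by decide) (by decide) (by decide) (by decide) (by decide)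
  have a3 := h 0 1 3 4 (by decide) (by decide) (by decide) (by decide) (by decide) (by decide)
  have a4 := h 0 2 1 3 (by decide) (by decide) (by decide) (by decide) (by decide) (by decide)
  have a5 := h 0 2 1 4 (by decide) (by decide) (by decide) (by decide) (by decide) (by decide)
  have a6 := h 0 2 3 4 (by decide) (by decide) (by decide) (by decide) (by decide) (by decide)
  have a7 := h 0 3 1 2 (by decide) (by decide) (by decide) (by decide) (by decide) (by decide)
  have a8 := h 0 3 1 4 (by decide) (by decide) (by decide) (by decide) (by decide) (by decide)
  have a9 := h 0 3 2 4 (by decide) (by decide) (by decide) (by decide) (by decide) (by decide)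
  have b1 := h 0 4 1 2 (by decide) (by decide) (by decide) (by decide) (by decide) (by decide)
  have b2 := h 0 4 1 3 (by decide) (by decide) (by decide) (by decide) (by decide) (by decide)
  have b3 := h 0 4 2 3 (by decide) (by decide) (by decide) (by decide) (by decide) (by decide)
  have b4 := h 1 2 3 4 (by decide) (by decide) (by decide) (by decide) (by decide) (by decide)
  have b5 := h 1 3 2 4 (by decide) (by decide) (by decide) (by decide) (by decide) (by decide)
  have b6 := h 1 4 2 3 (by decide) (by decide) (by decide) (by decide) (by decide) (by decide)
  simp (decide := true) only [if_true, if_false] at a1 a2 a3 a4 a5 a6 a7 a8 a9 b1 b2 b3 b4 b5 b6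
  omega

theorem other_pair : ∀ i j v : Fin 5, i < j → v ≠ i → v ≠ j → ∃ w : Fin 5, w ≠ i ∧ w ≠ j ∧ w ≠ v := by
  decide

/-- In any drawing of `K₅` by continuous curves, two independent edges meet. -/
theorem k5_drawing (p : Fin 5 → ℂ) (γ : Fin 5 → Fin 5 → ℝ → ℂ)
    (hc : ∀ i j, i < j → Continuous (γ i j))
    (h0 : ∀ i j, i < j → γ i j 0 = p i) (h1 : ∀ i j, i < j → γ i j 1 = p j)
    (hd : ∀ i j k l : Fin 5, i < j → k < l → i ≠ k → i ≠ l → j ≠ k → j ≠ l →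
      ∀ s t, γ i j s ≠ γ k l t) : False := by
  -- edges avoid other vertices
  have hv : ∀ i j v : Fin 5, i < j → v ≠ i → v ≠ j → ∀ s, γ i j s - p v ≠ 0 := by
    intro i j v hij hvi hvj s
    obtain ⟨w, hwi, hwj, hwv⟩ := other_pair i j v hij hvi hvj
    rw [sub_ne_zero]
    rcases lt_or_gt_of_ne hwv with h | h
    · rw [← h1 w v h]; exact hd i j w v hij h hwi.symm hvi.symm hwj.symm hvj.symm s 1
    · rw [← h0 v w h]; exact hd i j v w hij h hvi.symm hwi.symm hvj.symm hwj.symm s 0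
  have hp : ∀ a b : Fin 5, a < b → p a - p b ≠ 0 := by
    intro a b hab
    obtain ⟨w, hw⟩ : ∃ w : Fin 5, w ≠ a ∧ w ≠ b := by
      revert a b; decide
    rcases lt_or_gt_of_ne hw.1 with h | h
    · rw [← h1 w a h]; exact hv w a b h hw.2.symm hab.ne' 1
    · rw [← h0 a w h]; exact hv a w b h hab.ne' hw.2.symm 0
  have hL : ∀ i j v : Fin 5, ∃ L : ℝ → ℂ, (i < j → v ≠ i → v ≠ j →
      Continuous L ∧ ∀ s, Complex.exp (L s) = γ i j s - p v) := by
    intro i j v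
    by_cases h : i < j ∧ v ≠ i ∧ v ≠ j
    · obtain ⟨f, hf⟩ := exists_log (0 : ℝ) (fun s => γ i j s - p v)
        ((hc i j h.1).sub continuous_const) (hv i j v h.1 h.2.1 h.2.2)
      exact ⟨f, fun _ _ _ => hf⟩
    · exact ⟨fun _ => 0, fun a b c => absurd ⟨a, b, c⟩ h⟩
  choose L hL using hL
  have hTheta : ∀ i j k l : Fin 5, i < j → k < l → i ≠ k → i ≠ l → j ≠ k → j ≠ l →
      (L i j k 1 - L i j k 0) + (L k l j 1 - L k l j 0) - (L i j l 1 - L i j l 0)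
        - (L k l i 1 - L k l i 0) = 0 := by
    intro i j k l hij hkl hik hil hjk hjl
    obtain ⟨M, hMc, hM⟩ := exists_log ((0, 0) : ℝ × ℝ) (fun x => γ i j x.1 - γ k l x.2)
      (((hc i j hij).comp continuous_fst).sub ((hc k l hkl).comp continuous_snd))
      (fun x => sub_ne_zero.mpr (hd i j k l hij hkl hik hil hjk hjl x.1 x.2))
    have e1 := log_change_unique (fun s => M (s, 0)) (L i j k) (by fun_prop)
      (hL i j k hij hik.symm hjk.symm).1 1
      (fun t => by rw [hM, (hL i j k hij hik.symm hjk.symm).2, h0 k l hkl, one_mul])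
    have e2 := log_change_unique (fun s => M (s, 1)) (L i j l) (by fun_prop)
      (hL i j l hij hil.symm hjl.symm).1 1
      (fun t => by rw [hM, (hL i j l hij hil.symm hjl.symm).2, h1 k l hkl, one_mul])
    have e3 := log_change_unique (fun s => M (0, s)) (L k l i) (by fun_prop)
      (hL k l i hkl hik hil).1 (-1)
      (fun t => by rw [hM, (hL k l i hkl hik hil).2, h0 i j hij]; ring)
    have e4 := log_change_unique (fun s => M (1, s)) (L k l j) (by fun_prop)
      (hL k l j hkl hjk hjl).1 (-1)
      (fun t => by rw [hM, (hL k l j hkl hjk hjl).2, h1 i j hij]; ring)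
    linear_combination e2 + e3 - e1 - e4
  -- logarithms of differences of the vertices
  let lam : Fin 5 → Fin 5 → ℂ := fun a b =>
    if a < b then Complex.log (p a - p b) else Complex.log (p b - p a) + Real.pi * Complex.I
  have hlam : ∀ a b, a ≠ b → Complex.exp (lam a b) = p a - p b := by
    intro a b hab
    by_cases h : a < b
    · simp only [lam, h, if_true]; exact Complex.exp_log (hp a b h)
    · have h' : b < a := lt_of_le_of_ne (not_lt.mp h) hab.symm
      simp only [lam, h, if_false]
      rw [Complex.exp_add, Complex.exp_log (hp b a h'), Complex.exp_pi_mul_I]; ring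
  have hsym : ∀ a b, a ≠ b → lam a b - lam b a = (if a < b then -1 else 1 : ℤ) * (Real.pi * Complex.I) := by
    intro a b hab
    by_cases h : a < b
    · have : ¬ b < a := not_lt.mpr h.le
      simp only [lam, h, this, if_true, if_false]; push_cast; ring
    · have h' : b < a := lt_of_le_of_ne (not_lt.mp h) hab.symm
      simp only [lam, h, h', if_true, if_false]; push_cast; ring
  have hn : ∀ i j v : Fin 5, ∃ n : ℤ, i < j → v ≠ i → v ≠ j →
      L i j v 1 - L i j v 0 = lam j v - lam i v + n * (2 * Real.pi * Complex.I) := by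
    intro i j v
    by_cases h : i < j ∧ v ≠ i ∧ v ≠ j
    · have hLL := (hL i j v h.1 h.2.1 h.2.2).2
      have : Complex.exp (L i j v 1 - L i j v 0) = Complex.exp (lam j v - lam i v) := by
        rw [Complex.exp_sub, Complex.exp_sub, hLL, hLL, h0 i j h.1, h1 i j h.1,
          hlam j v h.2.2.symm, hlam i v h.2.1.symm]
      obtain ⟨n, hn⟩ := Complex.exp_eq_exp_iff_exists_int.mp this
      exact ⟨n, fun _ _ _ => hn⟩
    · exact ⟨0, fun a b c => absurd ⟨a, b, c⟩ h⟩
  choose n hn using hn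
  refine parity_core n fun i j k l hij hkl hik hil hjk hjl => ?_
  have e := hTheta i j k l hij hkl hik hil hjk hjl
  rw [hn i j k hij hik.symm hjk.symm, hn k l j hkl hjk hjl, hn i j l hij hil.symm hjl.symm,
    hn k l i hkl hik hil] at e
  have s1 := hsym j k hjk
  have s2 := hsym i k hik
  have s3 := hsym j l hjl
  have s4 := hsym i l hil
  have hpi : (Real.pi * Complex.I : ℂ) ≠ 0 :=
    mul_ne_zero (by exact_mod_cast Real.pi_ne_zero) Complex.I_ne_zero
  have : ((2 * (n i j k + n k l j - n i j l - n k l i) + (if j < k then -1 else 1)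
        - (if i < k then -1 else 1) - (if j < l then -1 else 1) + (if i < l then -1 else 1) : ℤ) : ℂ)
        * (Real.pi * Complex.I) = 0 := by
    rw [Int.cast_add, Int.cast_sub, Int.cast_sub, Int.cast_add, add_mul, sub_mul, sub_mul, add_mul,
      ← s1, ← s2, ← s3, ← s4]
    push_cast
    linear_combination e
  exact_mod_cast (mul_eq_zero.mp this).resolve_right hpi

/-- `u` and `v` are joined by a walk inside `Q`. -/
def WalkIn {V : Type*} (G : SimpleGraph V) (Q : Finset V) (u v : V) : Prop :=
  ∃ p : G.Walk u v, ∀ x ∈ p.support, x ∈ Q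

theorem curve_pathConnected (c : Set (ℝ × ℝ)) (h : IsCurve c) : IsPathConnected c := by
  obtain ⟨f, hf, rfl⟩ := h
  exact ((convex_Icc (0:ℝ) 1).isPathConnected ⟨0, by simp⟩).image' hf

theorem joinedIn_of_walk {V : Type*} (G : SimpleGraph V) (γ : V → Set (ℝ × ℝ))
    (hγ : ∀ v, IsCurve (γ v)) (hG : ∀ u v : V, u ≠ v → (G.Adj u v ↔ (γ u ∩ γ v).Nonempty))
    (Q : Finset V) {u v : V} (p : G.Walk u v) (hp : ∀ x ∈ p.support, x ∈ Q) :
    ∀ a ∈ γ u, ∀ b ∈ γ v, JoinedIn (⋃ x ∈ Q, γ x) a b := by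
  have hsub : ∀ x ∈ Q, γ x ⊆ ⋃ x ∈ Q, γ x := fun x hx => Set.subset_biUnion_of_mem (u := γ) hx
  induction p with
  | nil =>
    intro a ha b hb
    exact ((curve_pathConnected _ (hγ _)).joinedIn a ha b hb).mono (hsub _ (hp _ (by simp)))
  | cons h q ih =>
    intro a ha b hb
    obtain ⟨z, hz1, hz2⟩ := (hG _ _ h.ne).mp h
    refine JoinedIn.trans (y := z) ?_ (ih (fun x hx => hp x (by simp [hx])) z hz2 b hb)
    exact ((curve_pathConnected _ (hγ _)).joinedIn a ha z hz1).mono (hsub _ (hp _ (by simp)))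

theorem string_k5 {V : Type*} (G : SimpleGraph V) (hs : IsStringGraph G) (v : Fin 5 → V)
    (Q : Fin 5 → Fin 5 → Finset V) (hQ : ∀ i j, i < j → WalkIn G (Q i j) (v i) (v j)) :
    ∃ i j k l : Fin 5, i < j ∧ k < l ∧ i ≠ k ∧ i ≠ l ∧ j ≠ k ∧ j ≠ l ∧
      ∃ x ∈ Q i j, ∃ y ∈ Q k l, x = y ∨ G.Adj x y := by
  obtain ⟨γ, hγ, hG⟩ := hs
  by_contra hcon
  push Not at hcon
  have hne : ∀ v, (γ v).Nonempty := fun v => (curve_pathConnected _ (hγ v)).nonempty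
  choose pt hpt using hne
  have hpath : ∀ i j : Fin 5, ∃ f : ℝ → ℝ × ℝ, i < j → Continuous f ∧ f 0 = pt (v i) ∧
      f 1 = pt (v j) ∧ ∀ t, f t ∈ ⋃ x ∈ Q i j, γ x := by
    intro i j
    by_cases h : i < j
    · obtain ⟨p, hp⟩ := hQ i j h
      obtain ⟨P, hP⟩ := joinedIn_of_walk G γ hγ hG (Q i j) p hp _ (hpt _) _ (hpt _)
      refine ⟨P.extend, fun _ => ⟨P.continuous_extend, P.extend_zero, P.extend_one, fun t => ?_⟩⟩
      have : P.extend t ∈ Set.range P := by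
        exact ⟨Set.projIcc 0 1 zero_le_one t, rfl⟩
      obtain ⟨s, hs⟩ := this
      rw [← hs]; exact hP s
    · exact ⟨fun _ => 0, fun h' => absurd h' h⟩
  choose f hf using hpath
  let Φ := Complex.equivRealProdCLM.symm
  refine k5_drawing (fun i => Φ (pt (v i))) (fun i j t => Φ (f i j t))
    (fun i j h => Φ.continuous.comp (hf i j h).1)
    (fun i j h => by rw [(hf i j h).2.1]) (fun i j h => by rw [(hf i j h).2.2.1]) ?_
  intro i j k l hij hkl h1 h2 h3 h4 s t heq
  have heq := Φ.injective heq
  have m1 := (hf i j hij).2.2.2 s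
  have m2 := (hf k l hkl).2.2.2 t
  rw [← heq] at m2
  simp only [Set.mem_iUnion] at m1 m2
  obtain ⟨x, hx, hx'⟩ := m1
  obtain ⟨y, hy, hy'⟩ := m2
  obtain ⟨hxy, hna⟩ := hcon i j k l hij hkl h1 h2 h3 h4 x hx y hy
  exact hna ((hG x y hxy).mpr ⟨_, hx', hy'⟩)

/-- Ball growing inside `T` around `c`. -/
theorem grow_ball {V : Type*} [Fintype V] [DecidableEq V] (G : SimpleGraph V) (T : Finset V)
    (c : V) (hcT : c ∈ T) (w : V → ℕ) (hw : ∀ v, 1 ≤ w v) (ε : ℝ) (hε : 0 < ε) (R : ℕ)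
    (hR : ((∑ v ∈ T, w v : ℕ) : ℝ) < (1 + ε) ^ R) :
    ∃ B S : Finset V, B ⊆ T ∧ S ⊆ T ∧ Disjoint B S ∧ c ∈ B ∪ S ∧
      (∀ u ∈ B, ∀ v ∈ T, G.Adj u v → v ∈ B ∪ S) ∧
      (S.card : ℝ) ≤ ε * ((∑ v ∈ B ∪ S, w v : ℕ) : ℝ) ∧
      ∀ u ∈ B, ∃ Q, WalkIn G Q u c ∧ ∑ x ∈ Q, w x ≤ R := by
  classical
  let reach : V → ℕ → Prop := fun v r => ∃ Q ⊆ T, WalkIn G Q v c ∧ ∑ x ∈ Q, w x ≤ r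
  have hmono : ∀ v r r', r ≤ r' → reach v r → reach v r' := by
    rintro v r r' h ⟨Q, h1, h2, h3⟩
    exact ⟨Q, h1, h2, h3.trans h⟩
  let B : ℕ → Finset V := fun r => T.filter fun v => reach v r
  let S : ℕ → Finset V := fun r => T.filter fun v => ¬ reach v r ∧ reach v (r + w v)
  have hcomp : ∀ v t r, t ≤ r → v ∈ S t → v ∈ B r ∪ S r := by
    intro v t r htr hv
    simp only [S, B, Finset.mem_union, Finset.mem_filter] at hv ⊢
    by_cases h : reach v r
    · exact Or.inl ⟨hv.1, h⟩
    · exact Or.inr ⟨hv.1, h, hmono _ _ _ (by omega) hv.2.2⟩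
  have hc0 : c ∈ S 0 := by
    simp only [S, Finset.mem_filter]
    refine ⟨hcT, ?_, {c}, by simpa using hcT, ⟨SimpleGraph.Walk.nil, by simp⟩, by simp⟩
    rintro ⟨Q, -, ⟨p, hp⟩, h⟩
    have := Finset.single_le_sum (f := w) (fun _ _ => Nat.zero_le _) (hp c (by simp))
    have := hw c
    omega
  let vol : ℕ → ℕ := fun r => ∑ t ∈ Finset.range r, (S t).card
  have hcount : ∀ v r, ((Finset.range r).filter fun t => v ∈ S t).card ≤ w v := by
    intro v r
    by_cases hex : ∃ t, v ∈ S t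
    · have hm := Nat.find_spec hex
      set t0 := Nat.find hex
      have : ((Finset.range r).filter fun t => v ∈ S t) ⊆ Finset.Ico t0 (t0 + w v) := by
        intro t ht
        rw [Finset.mem_filter] at ht
        rw [Finset.mem_Ico]
        refine ⟨Nat.find_min' hex ht.2, ?_⟩
        by_contra hlt
        push Not at hlt
        have h1 := (Finset.mem_filter.mp ht.2).2.1
        exact h1 (hmono _ _ _ hlt (Finset.mem_filter.mp hm).2.2)
      calc _ ≤ _ := Finset.card_le_card this
        _ = w v := by simp
    · push Not at hex
      rw [Finset.filter_false_of_mem (fun t _ => hex t)]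
      simp
  have hvol : ∀ r, vol r ≤ ∑ v ∈ B r ∪ S r, w v := by
    intro r
    have : vol r = ∑ v, ((Finset.range r).filter fun t => v ∈ S t).card := by
      simp only [vol, Finset.card_eq_sum_ones, Finset.sum_filter]
      rw [Finset.sum_comm]
      refine Finset.sum_congr rfl fun t _ => ?_
      simp
    rw [this, ← Finset.sum_subset (Finset.subset_univ (B r ∪ S r))]
    · exact Finset.sum_le_sum fun v _ => hcount v r
    · intro v _ hv
      rw [Finset.card_eq_zero, Finset.filter_eq_empty_iff]
      intro t ht hvt
      exact hv (hcomp v t r (Finset.mem_range.mp ht).le hvt)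
  have hBT : ∀ r, B r ⊆ T := fun r => Finset.filter_subset _ _
  have hST : ∀ r, S r ⊆ T := fun r => Finset.filter_subset _ _
  obtain ⟨r, hrR, hr⟩ : ∃ r ≤ R, ((S r).card : ℝ) ≤ ε * (vol r : ℝ) := by
    by_contra hcon
    push Not at hcon
    have hgrow : ∀ r ≤ R, (1 + ε) ^ r ≤ (vol (r + 1) : ℝ) := by
      intro r
      induction r with
      | zero =>
        intro _
        have : 1 ≤ vol 1 := by
          simp only [vol, Finset.range_one, Finset.sum_singleton]
          exact Finset.card_pos.mpr ⟨c, hc0⟩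
        simpa using this
      | succ r ih =>
        intro h
        have h1 := ih (by omega)
        have h2 := hcon (r + 1) h
        have h3 : (vol (r + 1 + 1) : ℝ) = vol (r + 1) + (S (r + 1)).card := by
          simp only [vol]; rw [Finset.sum_range_succ]; push_cast; rfl
        rw [h3, pow_succ]
        nlinarith
    have h1 := hgrow R le_rfl
    have h2 : vol (R + 1) ≤ ∑ v ∈ T, w v :=
      (hvol _).trans (Finset.sum_le_sum_of_subset (Finset.union_subset (hBT _) (hST _)))
    have h3 : (vol (R + 1) : ℝ) ≤ ((∑ v ∈ T, w v : ℕ) : ℝ) := by exact_mod_cast h2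
    linarith
  refine ⟨B r, S r, hBT r, hST r, ?_, hcomp c 0 r (Nat.zero_le _) hc0, ?_, ?_, ?_⟩
  · rw [Finset.disjoint_left]
    intro v h1 h2
    exact (Finset.mem_filter.mp h2).2.1 (Finset.mem_filter.mp h1).2
  · intro u hu v hv huv
    by_cases h : reach v r
    · exact Finset.mem_union_left _ (Finset.mem_filter.mpr ⟨hv, h⟩)
    · refine Finset.mem_union_right _ (Finset.mem_filter.mpr ⟨hv, h, ?_⟩)
      obtain ⟨Q, h1, ⟨p, hp⟩, h3⟩ := (Finset.mem_filter.mp hu).2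
      refine ⟨insert v Q, Finset.insert_subset hv h1, ⟨SimpleGraph.Walk.cons huv.symm p, ?_⟩, ?_⟩
      · intro x hx
        rw [SimpleGraph.Walk.support_cons, List.mem_cons] at hx
        rcases hx with rfl | hx
        · simp
        · exact Finset.mem_insert_of_mem (hp x hx)
      · by_cases hvQ : v ∈ Q
        · rw [Finset.insert_eq_of_mem hvQ]; omega
        · rw [Finset.sum_insert hvQ]; omega
  · refine hr.trans (mul_le_mul_of_nonneg_left ?_ hε.le)
    exact_mod_cast hvol r
  · intro u hu
    obtain ⟨Q, h1, h2, h3⟩ := (Finset.mem_filter.mp hu).2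
    exact ⟨Q, h2, h3.trans hrR⟩

/-- Either there is a small separator, or a large cluster of small radius. -/
theorem exists_cluster {V : Type*} [Fintype V] [DecidableEq V] (G : SimpleGraph V)
    (w : V → ℕ) (hw : ∀ v, 1 ≤ w v) (ε : ℝ) (hε : 0 < ε) (R : ℕ) (k : ℝ)
    (hk : ε * ((∑ v, w v : ℕ) : ℝ) ≤ k)
    (hR : ((∑ v, w v : ℕ) : ℝ) < (1 + ε) ^ R)
    (hno : ∀ S : Finset V, IsSeparator G S → k < S.card) :
    ∃ (c : V) (U : Finset V), 2 / 3 * (Fintype.card V : ℝ) < U.card ∧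
      ∀ u ∈ U, ∃ Q, WalkIn G Q u c ∧ ∑ x ∈ Q, w x ≤ R := by
  classical
  let good : Finset V × Finset V → Prop := fun p =>
    Disjoint p.1 p.2 ∧ (p.1.card : ℝ) ≤ 2 / 3 * Fintype.card V ∧
    (∀ u ∈ p.1, ∀ v, G.Adj u v → v ∈ p.1 ∪ p.2) ∧
    (p.2.card : ℝ) ≤ ε * ((∑ v ∈ p.1 ∪ p.2, w v : ℕ) : ℝ)
  have hne : (Finset.univ.filter good).Nonempty := by
    refine ⟨(∅, ∅), ?_⟩
    simp only [Finset.mem_filter, Finset.mem_univ, true_and, good]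
    refine ⟨by simp, by simp, by simp, by simp⟩
  obtain ⟨⟨A, S⟩, hmem, hmax⟩ := Finset.exists_max_image (Finset.univ.filter good)
    (fun p => (p.1 ∪ p.2).card) hne
  simp only [Finset.mem_filter, Finset.mem_univ, true_and] at hmem hmax
  obtain ⟨hdis, hAcard, hAadj, hScard⟩ := hmem
  simp only at hdis hAcard hAadj hScard
  have hsum : ∀ X : Finset V, ε * ((∑ v ∈ X, w v : ℕ) : ℝ) ≤ k := fun X => by
    refine le_trans (mul_le_mul_of_nonneg_left ?_ hε.le) hk
    exact_mod_cast Finset.sum_le_sum_of_subset (Finset.subset_univ X)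
  by_cases hT : A ∪ S = Finset.univ
  · exfalso
    have := hno S ⟨A, ∅, by rw [Finset.union_empty, Finset.union_comm]; exact hT, hdis.symm,
      by simp, by simp, hAcard, by simp, by simp⟩
    linarith [hsum (A ∪ S)]
  · set T := (A ∪ S)ᶜ with hTdef
    have hTne : T.Nonempty := by
      rw [Finset.nonempty_iff_ne_empty]
      intro h
      exact hT ((Finset.compl_eq_empty_iff _).mp h)
    obtain ⟨c, hc⟩ := hTne
    have hR' : ((∑ v ∈ T, w v : ℕ) : ℝ) < (1 + ε) ^ R := by
      refine lt_of_le_of_lt ?_ hR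
      exact_mod_cast Finset.sum_le_sum_of_subset (Finset.subset_univ T)
    obtain ⟨B, S', hBT, hS'T, hBS, hcBS, hBadj, hS'card, hQ⟩ :=
      grow_ball G T c hc w hw ε hε R hR'
    by_cases hB : 2 / 3 * (Fintype.card V : ℝ) < B.card
    · exact ⟨c, B, hB, hQ⟩
    exfalso
    push Not at hB
    have hdAST : Disjoint (A ∪ S) T := disjoint_compl_right
    have hmT : ∀ x, x ∈ T ↔ x ∉ A ∧ x ∉ S := fun x => by
      rw [hTdef, Finset.mem_compl, Finset.mem_union, not_or]
    have hS2 : ((S ∪ S').card : ℝ) ≤ ε * ((∑ v ∈ (A ∪ B) ∪ (S ∪ S'), w v : ℕ) : ℝ) := by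
      have e : (A ∪ B) ∪ (S ∪ S') = (A ∪ S) ∪ (B ∪ S') := by
        ext x; simp only [Finset.mem_union]; tauto
      rw [e, Finset.sum_union (Finset.disjoint_of_subset_right (Finset.union_subset hBT hS'T) hdAST)]
      have : ((S ∪ S').card : ℝ) ≤ S.card + S'.card := by
        exact_mod_cast Finset.card_union_le S S'
      push_cast at hScard hS'card ⊢
      linarith
    have hd2 : Disjoint (A ∪ B) (S ∪ S') := by
      rw [Finset.disjoint_left]
      intro x hx hx'
      rw [Finset.mem_union] at hx hx'
      rw [Finset.disjoint_left] at hdis hBS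
      rcases hx with hx | hx <;> rcases hx' with hx' | hx'
      · exact hdis hx hx'
      · exact ((hmT x).mp (hS'T hx')).1 hx
      · exact ((hmT x).mp (hBT hx)).2 hx'
      · exact hBS hx hx'
    have hBadj' : ∀ u ∈ B, ∀ v, G.Adj u v → v ∈ B ∪ (S ∪ S') := by
      intro u hu v huv
      by_cases hv : v ∈ T
      · have := hBadj u hu v hv huv
        simp only [Finset.mem_union] at this ⊢; tauto
      · rw [hmT] at hv
        have hvA : v ∉ A := by
          intro hvA
          have := hAadj v hvA u huv.symm
          have hu' := (hmT u).mp (hBT hu)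
          rw [Finset.mem_union] at this
          tauto
        simp only [Finset.mem_union]; tauto
    have hAadj' : ∀ u ∈ A, ∀ v, G.Adj u v → v ∈ A ∪ (S ∪ S') := by
      intro u hu v huv
      have := hAadj u hu v huv
      simp only [Finset.mem_union] at this ⊢; tauto
    have hk2 : ((S ∪ S').card : ℝ) ≤ k := hS2.trans (hsum _)
    by_cases hAB : ((A ∪ B).card : ℝ) ≤ 2 / 3 * Fintype.card V
    · have h1 := hmax (A ∪ B, S ∪ S') ⟨hd2, hAB, ?_, hS2⟩
      · simp only at h1
        have : A ∪ S ⊂ A ∪ B ∪ (S ∪ S') := by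
          rw [Finset.ssubset_iff_of_subset (by intro x; simp only [Finset.mem_union]; tauto)]
          refine ⟨c, ?_, ?_⟩
          · simp only [Finset.mem_union] at hcBS ⊢; tauto
          · have := (hmT c).mp hc
            simp only [Finset.mem_union]; tauto
        have := Finset.card_lt_card this
        omega
      · intro u hu v huv
        simp only at hu ⊢
        rw [Finset.mem_union] at hu
        rcases hu with hu | hu
        · have := hAadj' u hu v huv
          simp only [Finset.mem_union] at this ⊢; tauto
        · have := hBadj' u hu v huv
          simp only [Finset.mem_union] at this ⊢; tauto
    · push Not at hAB
      have hABc : ((A ∪ B).card : ℝ) ≤ A.card + B.card := by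
        exact_mod_cast Finset.card_union_le A B
      -- a big side suffices
      have hfin : ∀ X : Finset V, (X.card : ℝ) ≤ 2 / 3 * Fintype.card V →
          1 / 3 * (Fintype.card V : ℝ) ≤ X.card → Disjoint X (S ∪ S') →
          (∀ u ∈ X, ∀ v, G.Adj u v → v ∈ X ∪ (S ∪ S')) → False := by
        intro X hX1 hX2 hX3 hX4
        have := hno (S ∪ S') ⟨X, (X ∪ (S ∪ S'))ᶜ, ?_, hX3.symm, ?_, ?_, hX1, ?_, ?_⟩
        · linarith
        · ext x; simp only [Finset.mem_union, Finset.mem_compl, Finset.mem_univ]; tauto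
        · rw [Finset.disjoint_left]; intro x; simp only [Finset.mem_union, Finset.mem_compl]; tauto
        · rw [Finset.disjoint_left]; intro x; simp only [Finset.mem_union, Finset.mem_compl]; tauto
        · have h1 : ((X ∪ (S ∪ S'))ᶜ).card ≤ Xᶜ.card :=
            Finset.card_le_card (Finset.compl_subset_compl.mpr Finset.subset_union_left)
          have h2 : X.card + Xᶜ.card = Fintype.card V := Finset.card_add_card_compl X
          have h1' : (((X ∪ (S ∪ S'))ᶜ).card : ℝ) ≤ Xᶜ.card := by exact_mod_cast h1
          have h2' : (X.card : ℝ) + Xᶜ.card = Fintype.card V := by exact_mod_cast h2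
          linarith
        · intro u hu v hv huv
          exact (Finset.mem_compl.mp hv) (hX4 u hu v huv)
      rcases le_total (A.card : ℝ) B.card with h | h
      · exact hfin B hB (by linarith)
          (Finset.disjoint_of_subset_left Finset.subset_union_right hd2) hBadj'
      · exact hfin A hAcard (by linarith)
          (Finset.disjoint_of_subset_left Finset.subset_union_left hd2) hAadj'

/-- Cluster lemma for real weights of total mass one. -/
theorem exists_cluster_real {V : Type*} [Fintype V] [DecidableEq V] (G : SimpleGraph V)
    (s : V → ℝ) (hs : ∀ v, 0 ≤ s v) (hs1 : ∑ v, s v = 1) (k : ℝ) (hk : 0 < k)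
    (hkn : k ≤ Fintype.card V)
    (hno : ∀ S : Finset V, IsSeparator G S → k < S.card) :
    ∃ (c : V) (U : Finset V), 2 / 3 * (Fintype.card V : ℝ) < U.card ∧
      ∀ u ∈ U, ∃ Q, WalkIn G Q u c ∧
        ∑ x ∈ Q, s x ≤ 4 * ((Nat.log 2 (2 * Fintype.card V) + 1 : ℕ) : ℝ) / k := by
  set n := Fintype.card V with hn
  have hn0 : (0 : ℝ) < n := lt_of_lt_of_le hk hkn
  set L := Nat.log 2 (2 * n) + 1 with hL
  let w : V → ℕ := fun v => ⌊(n : ℝ) * s v⌋₊ + 1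
  have hw : ∀ v, 1 ≤ w v := fun v => by simp [w]
  have hws : ∀ v, (n : ℝ) * s v ≤ w v := fun v => by
    have := (Nat.lt_floor_add_one ((n : ℝ) * s v)).le
    simpa [w] using this
  have hwsum : ((∑ v, w v : ℕ) : ℝ) ≤ 2 * n := by
    push_cast
    calc ∑ v, (w v : ℝ) ≤ ∑ v, ((n : ℝ) * s v + 1) := by
          refine Finset.sum_le_sum fun v _ => ?_
          have := Nat.floor_le (mul_nonneg hn0.le (hs v))
          simp only [w]; push_cast; linarith
      _ = 2 * n := by
          rw [Finset.sum_add_distrib, ← Finset.mul_sum, hs1]; simp [← hn]; ring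
  set ε : ℝ := k / (2 * n) with hεdef
  have hε : 0 < ε := by positivity
  have hε1 : ε ≤ 1 := by rw [hεdef, div_le_one (by positivity)]; linarith
  set q := ⌈1 / ε⌉₊ with hq
  have hq1 : 1 / ε ≤ q := Nat.le_ceil _
  have hq2 : (q : ℝ) ≤ 2 / ε := by
    have h1 := (Nat.ceil_lt_add_one (by positivity : 0 ≤ 1 / ε)).le
    have h2 : 1 ≤ 1 / ε := by rw [le_div_iff₀ hε]; linarith
    have h3 : 2 / ε = 1 / ε + 1 / ε := by ring
    rw [h3]; linarith
  have hpow : (2 : ℝ) ≤ (1 + ε) ^ q := by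
    have h1 := one_add_mul_le_pow (by linarith : (-2 : ℝ) ≤ ε) q
    have h2 : 1 ≤ q * ε := by rwa [div_le_iff₀ hε] at hq1
    linarith
  have hR : ((∑ v, w v : ℕ) : ℝ) < (1 + ε) ^ (q * L) := by
    have h1 : 2 * n < 2 ^ L := Nat.lt_pow_succ_log_self (by norm_num) _
    have h1' : (2 * n : ℝ) < 2 ^ L := by exact_mod_cast h1
    calc _ ≤ (2 * n : ℝ) := hwsum
      _ < 2 ^ L := h1'
      _ ≤ ((1 + ε) ^ q) ^ L := pow_le_pow_left₀ (by norm_num) hpow L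
      _ = _ := by rw [← pow_mul]
  have hkε : ε * ((∑ v, w v : ℕ) : ℝ) ≤ k := by
    calc _ ≤ ε * (2 * n) := mul_le_mul_of_nonneg_left hwsum hε.le
      _ = k := by rw [hεdef]; field_simp
  obtain ⟨c, U, hU, h⟩ := exists_cluster G w hw ε hε (q * L) k hkε hR hno
  refine ⟨c, U, hU, fun u hu => ?_⟩
  obtain ⟨Q, hQ1, hQ2⟩ := h u hu
  refine ⟨Q, hQ1, ?_⟩
  have h1 : (n : ℝ) * ∑ x ∈ Q, s x ≤ (q : ℝ) * L := by
    rw [Finset.mul_sum]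
    calc _ ≤ ∑ x ∈ Q, (w x : ℝ) := Finset.sum_le_sum fun x _ => hws x
      _ ≤ _ := by exact_mod_cast hQ2
  have h2 : (q : ℝ) * L ≤ 2 / ε * L := mul_le_mul_of_nonneg_right hq2 (Nat.cast_nonneg _)
  have h3 : 2 / ε * L = n * (4 * L / k) := by rw [hεdef]; field_simp; ring
  exact le_of_mul_le_mul_left (by linarith) hn0

/-- A finite minimax statement. -/
theorem finite_minimax {α β : Type*} [Fintype α] [DecidableEq α] [Nonempty α] [Fintype β]
    (a : β → α → ℝ) (t t' : ℝ) (htt : t < t')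
    (h : ∀ s : α → ℝ, (∀ x, 0 ≤ s x) → ∑ x, s x = 1 → ∃ b, ∑ x, s x * a b x ≤ t) :
    ∃ μ : β → ℝ, (∀ b, 0 ≤ μ b) ∧ ∑ b, μ b = 1 ∧ ∀ x, ∑ b, μ b * a b x ≤ t' := by
  classical
  let A : Set (α → ℝ) := Set.pi Set.univ fun _ => Set.Iio t'
  let F : (β → ℝ) →ₗ[ℝ] (α → ℝ) :=
    { toFun := fun μ x => ∑ b, μ b * a b x
      map_add' := by intro p q; ext x; simp [add_mul, Finset.sum_add_distrib]
      map_smul' := by intro c p; ext x; simp [Finset.mul_sum, mul_assoc] }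
  let B : Set (α → ℝ) := F '' stdSimplex ℝ β
  have hA1 : Convex ℝ A := convex_pi fun _ _ => convex_Iio t'
  have hA2 : IsOpen A := isOpen_set_pi Set.finite_univ fun _ _ => isOpen_Iio
  have hB : Convex ℝ B := (convex_stdSimplex ℝ β).linear_image F
  by_cases hdis : Disjoint A B
  · exfalso
    obtain ⟨f, u, hfA, hfB⟩ := geometric_hahn_banach_open hA1 hA2 hB hdis
    let s : α → ℝ := fun x => f (Pi.single x 1)
    have hf : ∀ y, f y = ∑ x, s x * y x := by
      intro y
      have : y = ∑ x, y x • (Pi.single x 1 : α → ℝ) := by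
        ext z; simp [Finset.sum_apply, Pi.single_apply]
      conv_lhs => rw [this]
      simp [s, map_sum, mul_comm]
    have hpt : ∀ b, a b ∈ B := by
      intro b
      refine ⟨Pi.single b 1, single_mem_stdSimplex ℝ b, ?_⟩
      ext x
      simp [F, Pi.single_apply]
    have hconst : ∀ z < t', (∑ x, s x) * z < u := by
      intro z hz
      have := hfA (fun _ => z) (by simp [A, Set.mem_pi, hz])
      rwa [hf, ← Finset.sum_mul] at this
    have hs0 : ∀ x, 0 ≤ s x := by
      intro x
      by_contra hneg
      push Not at hneg
      set z := t' - 1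
      -- go far in direction minus x
      obtain ⟨M, hM0, hM⟩ : ∃ M : ℝ, 0 ≤ M ∧ u ≤ (∑ x, s x) * z + M * (- s x) := by
        refine ⟨|u - (∑ x, s x) * z| / (- s x), by have : 0 < - s x := by linarith
                                                   positivity, ?_⟩
        rw [div_mul_cancel₀ _ (by linarith : - s x ≠ 0)]
        linarith [le_abs_self (u - (∑ x, s x) * z)]
      have := hfA (fun y => z - M * (Pi.single x 1 : α → ℝ) y) (by
        simp only [A, Set.mem_pi, Set.mem_univ, Set.mem_Iio, forall_const]
        intro y
        have : 0 ≤ (Pi.single x 1 : α → ℝ) y := by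
          rw [Pi.single_apply]; split_ifs <;> norm_num
        have := mul_nonneg hM0 this
        simp only [z]; linarith)
      rw [hf] at this
      have e : ∑ y, s y * (z - M * (Pi.single x 1 : α → ℝ) y) = (∑ x, s x) * z + M * (- s x) := by
        simp only [mul_sub, Finset.sum_sub_distrib, ← Finset.sum_mul]
        simp [Pi.single_apply]; ring
      rw [e] at this
      linarith
    have hσ : 0 < ∑ x, s x := by
      rcases (Finset.sum_nonneg fun x _ => hs0 x : 0 ≤ ∑ x, s x).lt_or_eq with h0 | h0
      · exact h0
      · exfalso
        have hz : ∀ x, s x = 0 := fun x =>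
          (Finset.sum_eq_zero_iff_of_nonneg fun x _ => hs0 x).mp h0.symm x (Finset.mem_univ x)
        obtain ⟨x0⟩ := ‹Nonempty α›
        obtain ⟨b, -⟩ := h (Pi.single x0 1)
          (fun y => by rw [Pi.single_apply]; split_ifs <;> norm_num) (by simp)
        have h1 := hfB _ (hpt b)
        have h2 := hconst (t' - 1) (by linarith)
        rw [hf] at h1
        simp [hz] at h1 h2
        linarith
    obtain ⟨b, hb⟩ := h (fun x => s x / ∑ x, s x) (fun x => div_nonneg (hs0 x) hσ.le)
      (by rw [← Finset.sum_div, div_self hσ.ne'])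
    have h1 := hfB _ (hpt b)
    rw [hf] at h1
    have h2 : (∑ x, s x * a b x) / (∑ x, s x) ≤ t := by
      rw [Finset.sum_div]
      refine le_trans (le_of_eq (Finset.sum_congr rfl fun x _ => ?_)) hb
      ring
    rw [div_le_iff₀ hσ] at h2
    have h3 := hconst t htt
    linarith
  · rw [Set.not_disjoint_iff] at hdis
    obtain ⟨y, hyA, μ, hμ, rfl⟩ := hdis
    refine ⟨μ, hμ.1, hμ.2, fun x => ?_⟩
    exact (hyA x (Set.mem_univ x)).le

/-- Data of a cluster: a centre, a large set of vertices and walks to the centre. -/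
abbrev Cluster {V : Type*} [Fintype V] (G : SimpleGraph V) : Type _ :=
  {b : V × Finset V × (V → Finset V) //
    2 / 3 * (Fintype.card V : ℝ) < b.2.1.card ∧ ∀ u ∈ b.2.1, WalkIn G (b.2.2 u) u b.1}

theorem exists_flow {V : Type*} [Fintype V] [DecidableEq V] (G : SimpleGraph V)
    [Fintype (Cluster G)]
    (k : ℝ) (hk : 0 < k) (hkn : k ≤ Fintype.card V)
    (hno : ∀ S : Finset V, IsSeparator G S → k < S.card) :
    ∃ μ : Cluster G → ℝ, (∀ b, 0 ≤ μ b) ∧ ∑ b, μ b = 1 ∧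
      ∀ x, ∑ b, μ b * (∑ u ∈ b.1.2.1, if x ∈ b.1.2.2 u then (1 : ℝ) else 0) ≤
        2 * (Fintype.card V * (4 * ((Nat.log 2 (2 * Fintype.card V) + 1 : ℕ) : ℝ) / k)) := by
  classical
  have hn0 : (0 : ℝ) < Fintype.card V := lt_of_lt_of_le hk hkn
  have : Nonempty V := Fintype.card_pos_iff.mp (by exact_mod_cast hn0)
  set D : ℝ := 4 * ((Nat.log 2 (2 * Fintype.card V) + 1 : ℕ) : ℝ) / k with hD
  have hD0 : 0 < D := by rw [hD]; push_cast; positivity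
  refine finite_minimax (fun (b : Cluster G) x => ∑ u ∈ b.1.2.1, if x ∈ b.1.2.2 u then (1 : ℝ) else 0)
    (Fintype.card V * D) _ (by nlinarith [mul_pos hn0 hD0]) ?_
  intro s hs hs1
  obtain ⟨c, U, hU, h⟩ := exists_cluster_real G s hs hs1 k hk hkn hno
  have h' : ∀ u, ∃ Q, u ∈ U → WalkIn G Q u c ∧ ∑ x ∈ Q, s x ≤ D := by
    intro u
    by_cases hu : u ∈ U
    · obtain ⟨Q, hQ⟩ := h u hu
      exact ⟨Q, fun _ => hQ⟩
    · exact ⟨∅, fun h => absurd h hu⟩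
  choose R hR using h'
  refine ⟨⟨(c, U, R), hU, fun u hu => (hR u hu).1⟩, ?_⟩
  simp only [Finset.mul_sum]
  rw [Finset.sum_comm]
  calc ∑ u ∈ U, ∑ x, s x * (if x ∈ R u then (1 : ℝ) else 0) = ∑ u ∈ U, ∑ x ∈ R u, s x := by
        refine Finset.sum_congr rfl fun u _ => ?_
        simp
    _ ≤ ∑ u ∈ U, D := Finset.sum_le_sum fun u hu => (hR u hu).2
    _ = U.card * D := by simp
    _ ≤ Fintype.card V * D := by
        refine mul_le_mul_of_nonneg_right ?_ hD0.le
        exact_mod_cast Finset.card_le_univ U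

theorem product_marginal {ι β : Type*} [Fintype ι] [DecidableEq ι] [Fintype β]
    (p : ι → β → ℝ) (hp : ∀ e, ∑ b, p e b = 1) (e f : ι) (hef : e ≠ f) (F H : β → ℝ) :
    ∑ ω : ι → β, (∏ i, p i (ω i)) * (F (ω e) * H (ω f)) =
      (∑ b, p e b * F b) * (∑ b, p f b * H b) := by
  classical
  let q : ι → β → ℝ := fun i b => p i b * ((if i = e then F b else 1) * (if i = f then H b else 1))
  have h1 : ∀ ω : ι → β, (∏ i, p i (ω i)) * (F (ω e) * H (ω f)) = ∏ i, q i (ω i) := by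
    intro ω
    simp only [q, Finset.prod_mul_distrib]
    simp
  have h2 : ∀ i, ∑ b, q i b = (if i = e then ∑ b, p e b * F b else 1) *
      (if i = f then ∑ b, p f b * H b else 1) := by
    intro i
    by_cases hie : i = e
    · have hif : i ≠ f := fun h => hef (hie.symm.trans h)
      subst hie
      simp [q, hif]
    · by_cases hif : i = f
      · subst hif
        simp [q, hie]
      · simp [q, hie, hif, hp]
  simp only [h1]
  have h3 : ∏ i, ∑ b, q i b = ∑ ω : ι → β, ∏ i, q i (ω i) := by
    rw [Finset.prod_univ_sum, Fintype.piFinset_univ]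
  rw [← h3]
  simp only [h2, Finset.prod_mul_distrib]
  simp

/-- Quadruples of indices describing two independent edges of `K₅`. -/
abbrev Indep (z : Fin 5 × Fin 5 × Fin 5 × Fin 5) : Prop :=
  z.1 < z.2.1 ∧ z.2.2.1 < z.2.2.2 ∧ z.1 ≠ z.2.2.1 ∧ z.1 ≠ z.2.2.2 ∧ z.2.1 ≠ z.2.2.1 ∧
    z.2.1 ≠ z.2.2.2

theorem fifth_index : ∀ i j k l : Fin 5, i < j → k < l → i ≠ k → i ≠ l → j ≠ k → j ≠ l →
    ∃ m : Fin 5, ∀ t : Fin 5, t = i ∨ t = j ∨ t = k ∨ t = l ∨ t = m := by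
  decide

theorem tuple_crossing {V β : Type*} [Fintype V] [DecidableEq V] [Fintype β]
    (G : SimpleGraph V) [DecidableRel G.Adj] (hs : IsStringGraph G)
    (W : Finset V) (ν : V → V → β → ℝ) (Q : V → V → β → Finset V)
    (hν0 : ∀ i j b, 0 ≤ ν i j b) (hν1 : ∀ i ∈ W, ∀ j ∈ W, ∑ b, ν i j b = 1)
    (hνQ : ∀ i ∈ W, ∀ j ∈ W, ∀ b, ν i j b ≠ 0 → WalkIn G (Q i j b) i j)
    (v : Fin 5 → V) (hv : ∀ i, v i ∈ W) :
    1 ≤ ∑ z : Fin 5 × Fin 5 × Fin 5 × Fin 5 with Indep z,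
      ∑ x, ∑ y, (if x = y ∨ G.Adj x y then (1 : ℝ) else 0) *
        ((∑ b, ν (v z.1) (v z.2.1) b * (if x ∈ Q (v z.1) (v z.2.1) b then (1 : ℝ) else 0)) *
         (∑ b, ν (v z.2.2.1) (v z.2.2.2) b *
            (if y ∈ Q (v z.2.2.1) (v z.2.2.2) b then (1 : ℝ) else 0))) := by
  classical
  let p : Fin 5 × Fin 5 → β → ℝ := fun e => ν (v e.1) (v e.2)
  have hp : ∀ e, ∑ b, p e b = 1 := fun e => hν1 _ (hv _) _ (hv _)
  let ind : Fin 5 × Fin 5 → V → β → ℝ := fun e x b => if x ∈ Q (v e.1) (v e.2) b then 1 else 0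
  have htot : ∑ ω : Fin 5 × Fin 5 → β, ∏ e, p e (ω e) = 1 := by
    have := Finset.prod_univ_sum (fun _ : Fin 5 × Fin 5 => (Finset.univ : Finset β)) p
    rw [Fintype.piFinset_univ] at this
    rw [← this]; simp [hp]
  have key : ∀ ω : Fin 5 × Fin 5 → β, (∏ e, p e (ω e)) ≤
      ∑ z : Fin 5 × Fin 5 × Fin 5 × Fin 5 with Indep z, ∑ x, ∑ y,
        (if x = y ∨ G.Adj x y then (1 : ℝ) else 0) * ((∏ e, p e (ω e)) *
          (ind (z.1, z.2.1) x (ω (z.1, z.2.1)) * ind (z.2.2.1, z.2.2.2) y (ω (z.2.2.1, z.2.2.2)))) := by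
    intro ω
    have hpos : 0 ≤ ∏ e, p e (ω e) := Finset.prod_nonneg fun e _ => hν0 _ _ _
    have hterm : ∀ z : Fin 5 × Fin 5 × Fin 5 × Fin 5, ∀ x y, 0 ≤
        (if x = y ∨ G.Adj x y then (1 : ℝ) else 0) * ((∏ e, p e (ω e)) *
          (ind (z.1, z.2.1) x (ω (z.1, z.2.1)) *
            ind (z.2.2.1, z.2.2.2) y (ω (z.2.2.1, z.2.2.2)))) := by
      intro z x y
      have h1 : ∀ e x b, 0 ≤ ind e x b := by
        intro e x b; simp only [ind]; split_ifs <;> norm_num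
      refine mul_nonneg (by split_ifs <;> norm_num) (mul_nonneg hpos (mul_nonneg (h1 _ _ _) (h1 _ _ _)))
    by_cases hz : ∏ e, p e (ω e) = 0
    · simp [hz]
    · have hne : ∀ e, p e (ω e) ≠ 0 := fun e => (Finset.prod_ne_zero_iff.mp hz) e (Finset.mem_univ e)
      obtain ⟨i, j, k, l, hij, hkl, h1, h2, h3, h4, x, hx, y, hy, hxy⟩ :=
        string_k5 G hs v (fun i j => Q (v i) (v j) (ω (i, j)))
          (fun i j _ => hνQ _ (hv i) _ (hv j) _ (hne (i, j)))
      refine le_trans ?_ (Finset.single_le_sum (fun z _ => Finset.sum_nonneg fun x _ =>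
        Finset.sum_nonneg fun y _ => hterm z x y)
        (Finset.mem_filter.mpr ⟨Finset.mem_univ (i, j, k, l), hij, hkl, h1, h2, h3, h4⟩))
      refine le_trans ?_ (Finset.single_le_sum (fun x _ =>
        Finset.sum_nonneg fun y _ => hterm _ x y) (Finset.mem_univ x))
      refine le_trans ?_ (Finset.single_le_sum (fun y _ => hterm _ x y) (Finset.mem_univ y))
      simp [ind, hx, hy, hxy]
  calc (1 : ℝ) = ∑ ω : Fin 5 × Fin 5 → β, ∏ e, p e (ω e) := htot.symm
    _ ≤ _ := Finset.sum_le_sum fun ω _ => key ω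
    _ = _ := by
      rw [Finset.sum_comm]
      refine Finset.sum_congr rfl fun z hz => ?_
      rw [Finset.sum_comm]
      refine Finset.sum_congr rfl fun x _ => ?_
      rw [Finset.sum_comm]
      refine Finset.sum_congr rfl fun y _ => ?_
      rw [← Finset.mul_sum]
      congr 1
      have hz' := (Finset.mem_filter.mp hz).2
      exact product_marginal p hp (z.1, z.2.1) (z.2.2.1, z.2.2.2)
        (fun h => hz'.2.2.1 (congrArg Prod.fst h)) _ _

theorem crossing_count {V β : Type*} [Fintype V] [DecidableEq V] [Fintype β]
    (G : SimpleGraph V) [DecidableRel G.Adj] (hs : IsStringGraph G)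
    (W : Finset V) (hW : W.Nonempty) (ν : V → V → β → ℝ) (Q : V → V → β → Finset V)
    (hν0 : ∀ i j b, 0 ≤ ν i j b) (hν1 : ∀ i ∈ W, ∀ j ∈ W, ∑ b, ν i j b = 1)
    (hνQ : ∀ i ∈ W, ∀ j ∈ W, ∀ b, ν i j b ≠ 0 → WalkIn G (Q i j b) i j)
    (Λ : ℝ)
    (hΛ : ∀ x, ∑ i ∈ W, ∑ j ∈ W, ∑ b, ν i j b * (if x ∈ Q i j b then (1 : ℝ) else 0) ≤ Λ) :
    (W.card : ℝ) ^ 4 ≤ 625 * ((Fintype.card V + 2 * G.edgeFinset.card) * Λ ^ 2) := by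
  classical
  let g : V → V → V → ℝ := fun i j x => ∑ b, ν i j b * (if x ∈ Q i j b then (1 : ℝ) else 0)
  have hg0 : ∀ i j x, 0 ≤ g i j x := fun i j x => Finset.sum_nonneg fun b _ =>
    mul_nonneg (hν0 _ _ _) (by split_ifs <;> norm_num)
  let cl : V → V → ℝ := fun x y => if x = y ∨ G.Adj x y then (1 : ℝ) else 0
  have hcl0 : ∀ x y, 0 ≤ cl x y := fun x y => by simp only [cl]; split_ifs <;> norm_num
  let X : V × V × V × V → ℝ := fun a => ∑ x, ∑ y, cl x y * (g a.1 a.2.1 x * g a.2.2.1 a.2.2.2 y)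
  have hX0 : ∀ a, 0 ≤ X a := fun a => Finset.sum_nonneg fun x _ => Finset.sum_nonneg fun y _ =>
    mul_nonneg (hcl0 _ _) (mul_nonneg (hg0 _ _ _) (hg0 _ _ _))
  have hclsum : ∑ x, ∑ y, cl x y ≤ Fintype.card V + 2 * G.edgeFinset.card := by
    have h1 : ∀ x, ∑ y, cl x y ≤ 1 + G.degree x := by
      intro x
      calc ∑ y, cl x y ≤ ∑ y, ((if x = y then (1 : ℝ) else 0) + (if G.Adj x y then (1 : ℝ) else 0)) := by
            refine Finset.sum_le_sum fun y _ => ?_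
            simp only [cl]
            by_cases h1 : x = y <;> by_cases h2 : G.Adj x y <;> simp [h1, h2]
        _ = 1 + G.degree x := by
            rw [Finset.sum_add_distrib]
            simp [← SimpleGraph.card_neighborFinset_eq_degree, SimpleGraph.neighborFinset_eq_filter]
    have h2 := G.sum_degrees_eq_twice_card_edges
    calc ∑ x, ∑ y, cl x y ≤ ∑ x, (1 + (G.degree x : ℝ)) := Finset.sum_le_sum fun x _ => h1 x
      _ = _ := by
        rw [Finset.sum_add_distrib]
        have h2' : ∑ x, (G.degree x : ℝ) = 2 * G.edgeFinset.card := by exact_mod_cast h2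
        rw [h2']; simp
  have hΛ' : ∀ x, ∑ i ∈ W, ∑ j ∈ W, g i j x ≤ Λ := hΛ
  have hG0 : ∀ x, 0 ≤ ∑ i ∈ W, ∑ j ∈ W, g i j x := fun x =>
    Finset.sum_nonneg fun i _ => Finset.sum_nonneg fun j _ => hg0 i j x
  have hXsum : ∑ a ∈ W ×ˢ W ×ˢ W ×ˢ W, X a ≤ (Fintype.card V + 2 * G.edgeFinset.card) * Λ ^ 2 := by
    have h1 : ∑ a ∈ W ×ˢ W ×ˢ W ×ˢ W, X a = ∑ x, ∑ y, cl x y *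
        ((∑ i ∈ W, ∑ j ∈ W, g i j x) * (∑ i ∈ W, ∑ j ∈ W, g i j y)) := by
      simp only [X]
      rw [Finset.sum_comm]
      refine Finset.sum_congr rfl fun x _ => ?_
      rw [Finset.sum_comm]
      refine Finset.sum_congr rfl fun y _ => ?_
      rw [← Finset.mul_sum]
      congr 1
      simp only [Finset.sum_product, Finset.sum_mul]
      simp only [Finset.mul_sum]
    rw [h1]
    calc _ ≤ ∑ x, ∑ y, cl x y * Λ ^ 2 := by
          refine Finset.sum_le_sum fun x _ => Finset.sum_le_sum fun y _ => ?_
          refine mul_le_mul_of_nonneg_left ?_ (hcl0 x y)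
          rw [pow_two]
          exact mul_le_mul (hΛ' x) (hΛ' y) (hG0 y) ((hG0 x).trans (hΛ' x))
      _ = (∑ x, ∑ y, cl x y) * Λ ^ 2 := by simp only [Finset.sum_mul]
      _ ≤ _ := mul_le_mul_of_nonneg_right hclsum (sq_nonneg _)
  set T := Fintype.piFinset (fun _ : Fin 5 => W) with hT
  have hTcard : (T.card : ℝ) = (W.card : ℝ) ^ 5 := by simp [hT, Fintype.card_piFinset]
  have hone : ∀ v ∈ T, (1 : ℝ) ≤ ∑ z : Fin 5 × Fin 5 × Fin 5 × Fin 5 with Indep z,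
      X (v z.1, v z.2.1, v z.2.2.1, v z.2.2.2) := by
    intro v hv
    exact tuple_crossing G hs W ν Q hν0 hν1 hνQ v (Fintype.mem_piFinset.mp hv)
  have hz : ∀ z : Fin 5 × Fin 5 × Fin 5 × Fin 5, Indep z →
      ∑ v ∈ T, X (v z.1, v z.2.1, v z.2.2.1, v z.2.2.2) ≤
        W.card * ∑ a ∈ W ×ˢ W ×ˢ W ×ˢ W, X a := by
    rintro ⟨i, j, k, l⟩ ⟨hij, hkl, h1, h2, h3, h4⟩
    simp only at hij hkl h1 h2 h3 h4 ⊢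
    obtain ⟨m, hm⟩ := fifth_index i j k l hij hkl h1 h2 h3 h4
    let φ : (Fin 5 → V) → V × V × V × V := fun v => (v i, v j, v k, v l)
    have hsub : T.image φ ⊆ W ×ˢ W ×ˢ W ×ˢ W := by
      intro a ha
      obtain ⟨v, hv, rfl⟩ := Finset.mem_image.mp ha
      have hv' := Fintype.mem_piFinset.mp hv
      simp [φ, hv']
    have hfib : ∀ a, (T.filter fun v => φ v = a).card ≤ W.card := by
      intro a
      refine Finset.card_le_card_of_injOn (fun v => v m) ?_ ?_
      · intro v hv
        have hv := (Finset.mem_filter.mp hv).1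
        exact Fintype.mem_piFinset.mp hv m
      · intro v hv v' hv' hvv
        have e1 := (Finset.mem_filter.mp hv).2
        have e2 := (Finset.mem_filter.mp hv').2
        have e := e1.trans e2.symm
        simp only [φ, Prod.mk.injEq] at e
        funext t
        rcases hm t with rfl | rfl | rfl | rfl | rfl
        · exact e.1
        · exact e.2.1
        · exact e.2.2.1
        · exact e.2.2.2
        · exact hvv
    calc ∑ v ∈ T, X (v i, v j, v k, v l) = ∑ v ∈ T, X (φ v) := rfl
      _ = ∑ a ∈ T.image φ, (T.filter fun v => φ v = a).card • X a := Finset.sum_comp X φ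
      _ ≤ ∑ a ∈ T.image φ, (W.card : ℝ) * X a := by
          refine Finset.sum_le_sum fun a _ => ?_
          rw [nsmul_eq_mul]
          exact mul_le_mul_of_nonneg_right (by exact_mod_cast hfib a) (hX0 a)
      _ ≤ ∑ a ∈ W ×ˢ W ×ˢ W ×ˢ W, (W.card : ℝ) * X a :=
          Finset.sum_le_sum_of_subset_of_nonneg hsub fun a _ _ =>
            mul_nonneg (Nat.cast_nonneg _) (hX0 a)
      _ = _ := by rw [← Finset.mul_sum]
  have hWpos : (0 : ℝ) < W.card := by exact_mod_cast Finset.card_pos.mpr hW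
  set Y := ∑ a ∈ W ×ˢ W ×ˢ W ×ˢ W, X a with hY
  have hY0 : 0 ≤ Y := Finset.sum_nonneg fun a _ => hX0 a
  have hmain : (W.card : ℝ) ^ 5 ≤ 625 * (W.card * Y) := by
    calc (W.card : ℝ) ^ 5 = ∑ v ∈ T, (1 : ℝ) := by rw [← hTcard]; simp
      _ ≤ ∑ v ∈ T, ∑ z : Fin 5 × Fin 5 × Fin 5 × Fin 5 with Indep z,
          X (v z.1, v z.2.1, v z.2.2.1, v z.2.2.2) := Finset.sum_le_sum hone
      _ = ∑ z : Fin 5 × Fin 5 × Fin 5 × Fin 5 with Indep z, ∑ v ∈ T,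
          X (v z.1, v z.2.1, v z.2.2.1, v z.2.2.2) := Finset.sum_comm
      _ ≤ ∑ z : Fin 5 × Fin 5 × Fin 5 × Fin 5 with Indep z, W.card * Y :=
          Finset.sum_le_sum fun z hz' => hz z (Finset.mem_filter.mp hz').2
      _ ≤ ∑ z : Fin 5 × Fin 5 × Fin 5 × Fin 5, W.card * Y :=
          Finset.sum_le_sum_of_subset_of_nonneg (Finset.filter_subset _ _) fun _ _ _ => by positivity
      _ = 625 * (W.card * Y) := by simp
  have h5 : (W.card : ℝ) * (W.card : ℝ) ^ 4 ≤ W.card * (625 * Y) := by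
    calc _ = (W.card : ℝ) ^ 5 := by ring
      _ ≤ _ := hmain
      _ = _ := by ring
  have h6 := le_of_mul_le_mul_left h5 hWpos
  linarith

theorem WalkIn.join {V : Type*} [DecidableEq V] {G : SimpleGraph V} {Q Q' : Finset V} {u v c : V}
    (h : WalkIn G Q u c) (h' : WalkIn G Q' v c) : WalkIn G (Q ∪ Q') u v := by
  obtain ⟨p, hp⟩ := h
  obtain ⟨q, hq⟩ := h'
  refine ⟨p.append q.reverse, fun x hx => ?_⟩
  rw [SimpleGraph.Walk.mem_support_append_iff, SimpleGraph.Walk.support_reverse,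
    List.mem_reverse] at hx
  rcases hx with hx | hx
  · exact Finset.mem_union_left _ (hp x hx)
  · exact Finset.mem_union_right _ (hq x hx)

theorem congestion_bound {V : Type*} [Fintype V] [DecidableEq V] (G : SimpleGraph V)
    [DecidableRel G.Adj] (hs : IsStringGraph G)
    (k : ℝ) (hk : 0 < k) (hkn : k ≤ Fintype.card V)
    (hno : ∀ S : Finset V, IsSeparator G S → k < S.card) :
    ((Fintype.card V : ℝ) / 4) ^ 4 ≤ 625 * ((Fintype.card V + 2 * G.edgeFinset.card) *
      (40 * (Fintype.card V : ℝ) ^ 2 *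
        (4 * ((Nat.log 2 (2 * Fintype.card V) + 1 : ℕ) : ℝ) / k)) ^ 2) := by
  classical
  have := Fintype.ofFinite (Cluster G)
  obtain ⟨μ, hμ0, hμ1, hμ⟩ := exists_flow G k hk hkn hno
  set D : ℝ := 4 * ((Nat.log 2 (2 * Fintype.card V) + 1 : ℕ) : ℝ) / k with hD
  set n : ℝ := (Fintype.card V : ℝ) with hn
  have hn0 : 0 < n := lt_of_lt_of_le hk hkn
  let U : Cluster G → Finset V := fun b => b.1.2.1
  let R : Cluster G → V → Finset V := fun b => b.1.2.2
  have hU : ∀ b, 2 / 3 * n < (U b).card := fun b => b.2.1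
  have hR : ∀ b, ∀ u ∈ U b, WalkIn G (R b u) u b.1.1 := fun b => b.2.2
  let q1 : V → ℝ := fun i => ∑ b, μ b * (if i ∈ U b then 1 else 0)
  let q2 : V → V → ℝ := fun i j => ∑ b, μ b * (if i ∈ U b ∧ j ∈ U b then 1 else 0)
  have hq1le : ∀ i, q1 i ≤ 1 := fun i => by
    rw [← hμ1]
    refine Finset.sum_le_sum fun b _ => ?_
    have := hμ0 b
    split_ifs <;> linarith
  have hq1sum : 2 / 3 * n ≤ ∑ i, q1 i := by
    simp only [q1]
    rw [Finset.sum_comm]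
    calc 2 / 3 * n = ∑ b, μ b * (2 / 3 * n) := by rw [← Finset.sum_mul, hμ1, one_mul]
      _ ≤ _ := by
        refine Finset.sum_le_sum fun b _ => ?_
        rw [← Finset.mul_sum]
        refine mul_le_mul_of_nonneg_left ?_ (hμ0 b)
        simpa using (hU b).le
  set W : Finset V := Finset.univ.filter fun i => 11 / 20 ≤ q1 i with hWdef
  have hWcard : n / 4 ≤ W.card := by
    have h1 : ∑ i, q1 i ≤ ∑ i : V, (11 / 20 + 9 / 20 * (if i ∈ W then 1 else 0) : ℝ) := by
      refine Finset.sum_le_sum fun i _ => ?_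
      by_cases hi : i ∈ W
      · simp only [hi, if_true]; linarith [hq1le i]
      · have : ¬ 11 / 20 ≤ q1 i := fun h => hi (Finset.mem_filter.mpr ⟨Finset.mem_univ _, h⟩)
        simp only [hi, if_false]; linarith
    rw [Finset.sum_add_distrib, ← Finset.mul_sum] at h1
    simp only [Finset.sum_const, Finset.card_univ, nsmul_eq_mul, ← hn] at h1
    have h2 : ∑ i : V, (if i ∈ W then 1 else 0 : ℝ) = W.card := by simp
    rw [h2] at h1
    linarith
  have hWne : W.Nonempty := by
    rw [← Finset.card_pos]
    have : (0 : ℝ) < W.card := by linarith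
    exact_mod_cast this
  have hq2 : ∀ i ∈ W, ∀ j ∈ W, 1 / 10 ≤ q2 i j := by
    intro i hi j hj
    have h1 := (Finset.mem_filter.mp hi).2
    have h2 := (Finset.mem_filter.mp hj).2
    have h3 : q1 i + q1 j ≤ (∑ b, μ b) + q2 i j := by
      simp only [q1, q2]
      rw [← Finset.sum_add_distrib, ← Finset.sum_add_distrib]
      refine Finset.sum_le_sum fun b _ => ?_
      have := hμ0 b
      by_cases ha : i ∈ U b <;> by_cases hb : j ∈ U b <;> simp [ha, hb] <;> try linarith
    rw [hμ1] at h3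
    linarith
  let ν : V → V → Cluster G → ℝ := fun i j b =>
    μ b * (if i ∈ U b ∧ j ∈ U b then 1 else 0) / q2 i j
  have hq20 : ∀ i j, 0 ≤ q2 i j := fun i j => Finset.sum_nonneg fun b _ =>
    mul_nonneg (hμ0 b) (by split_ifs <;> norm_num)
  have hres := crossing_count G hs W hWne ν (fun i j b => R b i ∪ R b j)
    (fun i j b => div_nonneg (mul_nonneg (hμ0 b) (by split_ifs <;> norm_num)) (hq20 i j))
    (fun i hi j hj => by
      simp only [ν]
      rw [← Finset.sum_div]
      exact div_self (by linarith [hq2 i hi j hj] : q2 i j ≠ 0))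
    (fun i hi j hj b hb => by
      by_cases h : i ∈ U b ∧ j ∈ U b
      · exact (hR b i h.1).join (hR b j h.2)
      · exact absurd (by simp [ν, h]) hb)
    (40 * n ^ 2 * D) ?_
  · exact le_trans (pow_le_pow_left₀ (by positivity) hWcard 4) hres
  · intro x
    let r : Cluster G → V → ℝ := fun b u => if u ∈ U b then (if x ∈ R b u then 1 else 0) else 0
    have hr0 : ∀ b u, 0 ≤ r b u := fun b u => by simp only [r]; split_ifs <;> norm_num
    have hrsum : ∑ b, μ b * ∑ u, r b u ≤ 2 * (n * D) := by
      refine le_trans (le_of_eq ?_) (hμ x)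
      refine Finset.sum_congr rfl fun b _ => ?_
      congr 1
      simp only [r]
      rw [← Finset.sum_filter]
      refine Finset.sum_congr ?_ fun _ _ => rfl
      ext; simp [U]
    have hterm : ∀ i ∈ W, ∀ j ∈ W, ∀ b, ν i j b * (if x ∈ R b i ∪ R b j then (1 : ℝ) else 0) ≤
        10 * (μ b * (r b i + r b j)) := by
      intro i hi j hj b
      have hq := hq2 i hi j hj
      have hν : ν i j b ≤ 10 * (μ b * (if i ∈ U b ∧ j ∈ U b then 1 else 0)) := by
        simp only [ν]
        rw [div_le_iff₀ (by linarith)]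
        have : 0 ≤ μ b * (if i ∈ U b ∧ j ∈ U b then (1 : ℝ) else 0) :=
          mul_nonneg (hμ0 b) (by split_ifs <;> norm_num)
        nlinarith
      have h1 := mul_le_mul_of_nonneg_right hν
        (by split_ifs <;> norm_num : (0 : ℝ) ≤ (if x ∈ R b i ∪ R b j then (1 : ℝ) else 0))
      refine h1.trans ?_
      rw [mul_assoc, mul_assoc]
      refine mul_le_mul_of_nonneg_left (mul_le_mul_of_nonneg_left ?_ (hμ0 b)) (by norm_num)
      by_cases ha : i ∈ U b <;> by_cases hb : j ∈ U b <;> by_cases hc : x ∈ R b i <;>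
        by_cases hd : x ∈ R b j <;> simp [ha, hb, hc, hd, r]
    have hsub : ∀ f : V → ℝ, (∀ i, 0 ≤ f i) → ∑ i ∈ W, f i ≤ ∑ i, f i := fun f hf =>
      Finset.sum_le_sum_of_subset_of_nonneg (Finset.subset_univ W) fun i _ _ => hf i
    have hF0 : ∀ i j, 0 ≤ ∑ b, 10 * (μ b * (r b i + r b j)) := fun i j =>
      Finset.sum_nonneg fun b _ => mul_nonneg (by norm_num)
        (mul_nonneg (hμ0 b) (add_nonneg (hr0 b i) (hr0 b j)))
    calc _ ≤ ∑ i ∈ W, ∑ j ∈ W, ∑ b, 10 * (μ b * (r b i + r b j)) :=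
          Finset.sum_le_sum fun i hi => Finset.sum_le_sum fun j hj => Finset.sum_le_sum fun b _ =>
            hterm i hi j hj b
      _ ≤ ∑ i, ∑ j, ∑ b, 10 * (μ b * (r b i + r b j)) :=
          (Finset.sum_le_sum fun i _ => hsub _ (hF0 i)).trans
            (hsub _ fun i => Finset.sum_nonneg fun j _ => hF0 i j)
      _ = 20 * n * ∑ b, μ b * ∑ u, r b u := by
          have e1 : ∀ i, ∑ j, ∑ b, 10 * (μ b * (r b i + r b j)) =
              ∑ b, ∑ j, 10 * (μ b * (r b i + r b j)) := fun i => Finset.sum_comm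
          simp only [e1]
          rw [Finset.sum_comm, Finset.mul_sum]
          refine Finset.sum_congr rfl fun b _ => ?_
          simp only [← Finset.mul_sum, Finset.sum_add_distrib, Finset.sum_const, Finset.card_univ,
            nsmul_eq_mul, ← hn]
          ring
      _ ≤ 20 * n * (2 * (n * D)) := mul_le_mul_of_nonneg_left hrsum (by positivity)
      _ = _ := by ring

theorem separator_bound {V : Type*} [Fintype V] [DecidableEq V] (G : SimpleGraph V)
    [DecidableRel G.Adj] (hs : IsStringGraph G) (hn : 0 < Fintype.card V) :
    ∃ S : Finset V, IsSeparator G S ∧ (S.card : ℝ) ≤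
      65000 * Real.sqrt (Fintype.card V + 2 * G.edgeFinset.card) *
        ((Nat.log 2 (2 * Fintype.card V) + 1 : ℕ) : ℝ) := by
  have hn' : (0 : ℝ) < Fintype.card V := by exact_mod_cast hn
  set L : ℝ := ((Nat.log 2 (2 * Fintype.card V) + 1 : ℕ) : ℝ) with hL
  have hL0 : 0 < L := by rw [hL]; push_cast; positivity
  set E : ℝ := (Fintype.card V + 2 * G.edgeFinset.card : ℝ) with hE
  have hE0 : 0 < E := by rw [hE]; positivity
  set k := 65000 * Real.sqrt E * L with hk
  have hk0 : 0 < k := by rw [hk]; positivity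
  by_contra hcon
  push Not at hcon
  have huniv : IsSeparator G (Finset.univ : Finset V) :=
    ⟨∅, ∅, by simp, by simp, by simp, by simp, by simp, by simp, by simp⟩
  have hkn : k ≤ Fintype.card V := by
    have := hcon _ huniv
    rw [Finset.card_univ] at this
    exact this.le
  have h := congestion_bound G hs k hk0 hkn hcon
  rw [← hL, ← hE] at h
  set n : ℝ := (Fintype.card V : ℝ)
  have h2 : k ^ 2 = 65000 ^ 2 * E * L ^ 2 := by
    rw [hk, mul_pow, mul_pow, Real.sq_sqrt hE0.le]
  have h3 : 625 * (E * (40 * n ^ 2 * (4 * L / k)) ^ 2) = n ^ 4 * (625 * 1600 * 16 / 65000 ^ 2) := by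
    have : (40 * n ^ 2 * (4 * L / k)) ^ 2 = 1600 * n ^ 4 * (16 * L ^ 2 / k ^ 2) := by
      rw [mul_pow, mul_pow, div_pow]; ring
    rw [this, h2]
    field_simp
  rw [h3] at h
  have h4 : 0 < n ^ 4 := by positivity
  have h5 : (n / 4) ^ 4 = n ^ 4 * (1 / 256) := by ring
  rw [h5] at h
  have := le_of_mul_le_mul_left h h4
  norm_num at this

/-- If there are many isolated vertices, the empty set is a separator. -/
theorem sparse_separator {V : Type*} [Fintype V] [DecidableEq V] (G : SimpleGraph V)
    [DecidableRel G.Adj] (h2 : 2 ≤ G.edgeFinset.card)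
    (h : 3 * G.edgeFinset.card < Fintype.card V) : IsSeparator G ∅ := by
  classical
  set m := G.edgeFinset.card
  set n := Fintype.card V with hn
  let N : Finset V := Finset.univ.filter fun v => 0 < G.degree v
  have hN : N.card ≤ 2 * m := by
    rw [← G.sum_degrees_eq_twice_card_edges]
    calc N.card = ∑ v ∈ N, 1 := by simp
      _ ≤ ∑ v ∈ N, G.degree v := Finset.sum_le_sum fun v hv => (Finset.mem_filter.mp hv).2
      _ ≤ _ := Finset.sum_le_sum_of_subset (Finset.subset_univ _)
  obtain ⟨A, hNA, -, hA⟩ := Finset.exists_subsuperset_card_eq (Finset.subset_univ N)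
    (n := 2 * n / 3) (by omega) (by rw [Finset.card_univ]; omega)
  have hAc : A.card + Aᶜ.card = n := Finset.card_add_card_compl A
  refine ⟨A, Aᶜ, by simp, by simp, by simp, disjoint_compl_right, ?_, ?_, ?_⟩
  · have : 3 * A.card ≤ 2 * n := by omega
    have : (3 * A.card : ℝ) ≤ 2 * n := by exact_mod_cast this
    linarith
  · have : 3 * Aᶜ.card ≤ 2 * n := by omega
    have : (3 * Aᶜ.card : ℝ) ≤ 2 * n := by exact_mod_cast this
    linarith
  · intro u _ v hv huv
    refine (Finset.mem_compl.mp hv) (hNA (Finset.mem_filter.mpr ⟨Finset.mem_univ _, ?_⟩))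
    rw [G.degree_pos_iff_exists_adj]
    exact ⟨u, huv.symm⟩

/-- There is an absolute constant `d > 0` such that every string graph with `m ≥ 2` edges
has a separator of size at most `d·√m·log₂ m`. -/
theorem string_graph_separator :
    ∃ d : ℝ, 0 < d ∧
      ∀ (V : Type) [Fintype V] [DecidableEq V] (G : SimpleGraph V) [DecidableRel G.Adj],
        IsStringGraph G → 2 ≤ G.edgeFinset.card →
        ∃ S : Finset V, IsSeparator G S ∧
          (S.card : ℝ) ≤ d * Real.sqrt (G.edgeFinset.card) *
            Real.logb 2 (G.edgeFinset.card) := by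
  refine ⟨1000000, by norm_num, ?_⟩
  intro V _ _ G _ hs hm
  have hm' : (2 : ℝ) ≤ G.edgeFinset.card := by exact_mod_cast hm
  set m : ℝ := (G.edgeFinset.card : ℝ) with hmdef
  have hlog1 : 1 ≤ Real.logb 2 m := by
    rw [Real.le_logb_iff_rpow_le (by norm_num) (by linarith)]
    simpa using hm'
  by_cases hsp : 3 * G.edgeFinset.card < Fintype.card V
  · refine ⟨∅, sparse_separator G hm hsp, ?_⟩
    have := Real.sqrt_nonneg m
    simp only [Finset.card_empty, Nat.cast_zero]
    positivity
  push Not at hsp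
  have hne : 0 < Fintype.card V := by
    rcases Nat.eq_zero_or_pos (Fintype.card V) with h0 | h0
    · exfalso
      have : IsEmpty V := Fintype.card_eq_zero_iff.mp h0
      have h1 := G.sum_degrees_eq_twice_card_edges
      simp only [Finset.univ_eq_empty, Finset.sum_empty] at h1
      omega
    · exact h0
  obtain ⟨S, hS, hcard⟩ := separator_bound G hs hne
  refine ⟨S, hS, hcard.trans ?_⟩
  have hsp' : (Fintype.card V : ℝ) ≤ 3 * m := by rw [hmdef]; exact_mod_cast hsp
  have hn1 : (1 : ℝ) ≤ Fintype.card V := by exact_mod_cast hne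
  have h1 : Real.sqrt (Fintype.card V + 2 * m) ≤ 3 * Real.sqrt m := by
    rw [Real.sqrt_le_left (by positivity), mul_pow, Real.sq_sqrt (by linarith)]
    linarith
  have h2 : ((Nat.log 2 (2 * Fintype.card V) + 1 : ℕ) : ℝ) ≤ 5 * Real.logb 2 m := by
    have h3 : ((Nat.log 2 (2 * Fintype.card V) : ℕ) : ℝ) ≤ Real.logb 2 (8 * m) := by
      rw [Real.le_logb_iff_rpow_le (by norm_num) (by linarith), Real.rpow_natCast]
      have : 2 ^ Nat.log 2 (2 * Fintype.card V) ≤ 2 * Fintype.card V :=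
        Nat.pow_log_le_self 2 (by omega)
      have h' : (2 : ℝ) ^ Nat.log 2 (2 * Fintype.card V) ≤ 2 * Fintype.card V := by
        exact_mod_cast this
      linarith
    have h4 : Real.logb 2 (8 * m) = 3 + Real.logb 2 m := by
      rw [Real.logb_mul (by norm_num) (by linarith)]
      congr 1
      rw [show (8 : ℝ) = 2 ^ (3 : ℝ) by norm_num, Real.logb_rpow (by norm_num) (by norm_num)]
    push_cast
    linarith
  calc _ ≤ 65000 * (3 * Real.sqrt m) * (5 * Real.logb 2 m) := by gcongr
    _ ≤ 1000000 * Real.sqrt m * Real.logb 2 m := by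
      have : 0 ≤ Real.sqrt m * Real.logb 2 m := mul_nonneg (Real.sqrt_nonneg _) (by linarith)
      nlinarith
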